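/- arXiv:2009.14729 — 3 statements merged into one kernel-verified Lean document; each statement's English description precedes it below -/
import Mathlib

section
/- Scale-lifting lemma (Lemma 2.1 of the paper, with D = 2^k): let w and w' be weight functions on a finite vertex set V with w'(u,v) ≤ w(u,v) for all u,v, let β ∈ ℕ, let ε ≥ 0 be a real number, and let D ∈ [0,∞]. Suppose that for every pair u, v ∈ V with d_w(u,v) ≤ D one has d_{w'}^{(β)}(u,v) ≤ (1+ε)·d_w(u,v). Then for every pair u, v ∈ V with d_w(u,v) ≤ 2D one has d_{w'}^{(2β+1)}(u,v) ≤ (1+ε)·d_w(u,v). -/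
open scoped ENNReal BigOperators

/-- The `t`-hop-bounded distance for a weight function `w` on `V`: the infimum,
over all sequences `u = x 0, x 1, ..., x m = v` with `m <= t`, of
the total weight `Sum_{j<m} w (x j) (x (j+1))`. -/
noncomputable def hopDist {V : Type*} (w : V → V → ℝ≥0∞) (t : ℕ) (u v : V) : ℝ≥0∞ :=
  ⨅ (m : ℕ) (_ : m ≤ t) (x : ℕ → V) (_ : x 0 = u) (_ : x m = v),
    ∑ j ∈ Finset.range m, w (x j) (x (j + 1))

/-- The distance for a weight function `w`: the infimum of hop-bounded distances. -/
noncomputable def graphDist {V : Type*} (w : V → V → ℝ≥0∞) (u v : V) : ℝ≥0∞ :=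
  ⨅ t : ℕ, hopDist w t u v

/-!
Suppose distances up to `a` are approximated within `s` hops and distances up to `b` within `t`
hops; the theorem is the case `a = b`, `s = t`. Cut a shortest walk of weight at most `a + b` at the
first edge whose inclusion brings the weight of the initial segment above `a`. The segment before
that edge then has weight at most `a` and the segment after it weight at most `b`, so both are
approximated, and the edge itself costs one additional hop. Shortest walks exist because, by
Higman's lemma, the finite sums of elements of a well-ordered set of nonnegative weights are again
well-ordered.
-/

theorem isPWO_addSubmonoid_closure {M : Type*} [AddCommMonoid M] [PartialOrder M]
    [IsOrderedAddMonoid M] [CanonicallyOrderedAdd M] {s : Set M} (hs : s.IsPWO) :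
    (AddSubmonoid.closure s : Set M).IsPWO := by
  rw [AddSubmonoid.closure_eq_image_sum]
  exact (hs.partiallyWellOrderedOn_sublistForall₂ (· ≤ ·)).image_of_monotone_on
    fun _ _ _ _ hsub => hsub.sum_le_sum fun _ _ => zero_le

section Walks

variable {V : Type*} {w w' : V → V → ℝ≥0∞} {u v : V} {x y : ℕ → V} {m s t : ℕ} {a b K : ℝ≥0∞}

/-- The weight of the walk `x 0, x 1, …, x m`. As in `hopDist`, a walk with `m` edges is encoded by
an infinite sequence whose entries beyond index `m` are irrelevant. -/
noncomputable def walkWeight (w : V → V → ℝ≥0∞) (x : ℕ → V) (m : ℕ) : ℝ≥0∞ :=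
  ∑ j ∈ Finset.range m, w (x j) (x (j + 1))

theorem walkWeight_zero (w : V → V → ℝ≥0∞) (x : ℕ → V) : walkWeight w x 0 = 0 :=
  Finset.sum_range_zero _

theorem walkWeight_succ (w : V → V → ℝ≥0∞) (x : ℕ → V) (m : ℕ) :
    walkWeight w x (m + 1) = walkWeight w x m + w (x m) (x (m + 1)) :=
  Finset.sum_range_succ _ _

theorem walkWeight_add (w : V → V → ℝ≥0∞) (x : ℕ → V) (m n : ℕ) :
    walkWeight w x (m + n) = walkWeight w x m + walkWeight w (fun j => x (m + j)) n :=
  Finset.sum_range_add _ _ _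

theorem walkWeight_mono (w : V → V → ℝ≥0∞) (x : ℕ → V) : Monotone (walkWeight w x) :=
  (Finset.sum_mono_set _).comp Finset.range_mono

theorem walkWeight_congr (h : ∀ j ≤ m, x j = y j) : walkWeight w x m = walkWeight w y m :=
  Finset.sum_congr rfl fun j hj => by
    have hjm : j < m := Finset.mem_range.1 hj
    rw [h j hjm.le, h (j + 1) hjm]

theorem exists_walkWeight_append (w : V → V → ℝ≥0∞) (hxy : x m = y 0) (n : ℕ) :
    ∃ z : ℕ → V, z 0 = x 0 ∧ z (m + n) = y n ∧
      walkWeight w z (m + n) = walkWeight w x m + walkWeight w y n := by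
  let z : ℕ → V := fun j => if j < m then x j else y (j - m)
  have z_left : ∀ j ≤ m, z j = x j := by
    intro j hj
    rcases hj.lt_or_eq with hlt | rfl
    · exact if_pos hlt
    · simp [z, hxy]
  have z_right : ∀ j, z (m + j) = y j := by simp [z]
  refine ⟨z, z_left 0 m.zero_le, z_right n, ?_⟩
  rw [walkWeight_add, walkWeight_congr z_left, funext z_right]

theorem exists_walkWeight_split (ha : a < walkWeight w x m) (hab : walkWeight w x m ≤ a + b) :
    ∃ i n, m = i + 1 + n ∧ walkWeight w x i ≤ a ∧ walkWeight w (fun j => x (i + 1 + j)) n ≤ b := by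
  obtain ⟨i, hi, hi_succ⟩ : ∃ i, ¬ a < walkWeight w x i ∧ a < walkWeight w x (i + 1) :=
    Nat.exists_not_and_succ_of_not_zero_of_exists (by simp [walkWeight_zero]) ⟨m, ha⟩
  have him : i < m := (walkWeight_mono w x).reflect_lt ((not_lt.1 hi).trans_lt ha)
  obtain ⟨n, rfl⟩ := Nat.exists_eq_add_of_le (Nat.succ_le_of_lt him)
  refine ⟨i, n, rfl, not_lt.1 hi, le_of_not_gt fun hb => hab.not_gt ?_⟩
  rw [walkWeight_add]
  exact ENNReal.add_lt_add hi_succ hb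

theorem walkWeight_mem_closure (w : V → V → ℝ≥0∞) (x : ℕ → V) (m : ℕ) :
    walkWeight w x m ∈ AddSubmonoid.closure (Set.range (Function.uncurry w)) :=
  sum_mem fun j _ => AddSubmonoid.subset_closure ⟨(x j, x (j + 1)), rfl⟩

theorem hopDist_le_walkWeight (w : V → V → ℝ≥0∞) (x : ℕ → V) (hmt : m ≤ t) :
    hopDist w t (x 0) (x m) ≤ walkWeight w x m :=
  iInf₂_le_of_le m hmt <| iInf_le_of_le x <| iInf_le_of_le rfl <| iInf_le _ rfl

theorem le_hopDist_iff :
    a ≤ hopDist w t u v ↔ ∀ m ≤ t, ∀ x : ℕ → V, x 0 = u → x m = v → a ≤ walkWeight w x m := by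
  simp only [hopDist, walkWeight, le_iInf_iff]

theorem hopDist_antitone (w : V → V → ℝ≥0∞) (u v : V) : Antitone fun t => hopDist w t u v :=
  fun _ _ hst => le_hopDist_iff.2 fun _ hm x hu hv =>
    hu ▸ hv ▸ hopDist_le_walkWeight w x (hm.trans hst)

theorem hopDist_one_le (w : V → V → ℝ≥0∞) (u v : V) : hopDist w 1 u v ≤ w u v := by
  simpa [walkWeight] using
    hopDist_le_walkWeight w (fun j => if j = 0 then u else v) (le_refl 1)

theorem hopDist_triangle (w : V → V → ℝ≥0∞) (s t : ℕ) (u v z : V) :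
    hopDist w (s + t) u z ≤ hopDist w s u v + hopDist w t v z := by
  rw [hopDist.eq_def w s, hopDist.eq_def w t]
  simp only [ENNReal.iInf_add, ENNReal.add_iInf, le_iInf_iff]
  rintro n hn y rfl rfl m hm x rfl hxy
  obtain ⟨p, hp_start, hp_end, hp_weight⟩ := exists_walkWeight_append w hxy n
  rw [← hp_start, ← hp_end]
  exact (hopDist_le_walkWeight w p (add_le_add hm hn)).trans_eq hp_weight

theorem graphDist_le_walkWeight (w : V → V → ℝ≥0∞) (x : ℕ → V) (m : ℕ) :
    graphDist w (x 0) (x m) ≤ walkWeight w x m :=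
  iInf_le_of_le m (hopDist_le_walkWeight w x le_rfl)

theorem exists_walkWeight_eq_graphDist (hw : (Set.range (Function.uncurry w)).IsPWO) (u v : V) :
    ∃ (x : ℕ → V) (m : ℕ), x 0 = u ∧ x m = v ∧ walkWeight w x m = graphDist w u v := by
  let walks : Set ((ℕ → V) × ℕ) := {p | p.1 0 = u ∧ p.1 p.2 = v}
  have weights_isPWO : ((fun p => walkWeight w p.1 p.2) '' walks).IsPWO :=
    (isPWO_addSubmonoid_closure hw).mono <|
      Set.image_subset_iff.2 fun p _ => walkWeight_mem_closure w p.1 p.2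
  have walks_nonempty : walks.Nonempty := ⟨(fun j => if j = 0 then u else v, 1), by simp [walks]⟩
  obtain ⟨⟨x, m⟩, ⟨rfl, rfl⟩, hmin⟩ := weights_isPWO.exists_minimalFor _ _ walks_nonempty
  refine ⟨x, m, rfl, rfl, le_antisymm ?_ (graphDist_le_walkWeight w x m)⟩
  refine le_iInf fun t => le_hopDist_iff.2 fun n _ y hy₀ hyn => ?_
  exact le_of_not_gt fun hlt => hlt.not_ge (hmin (j := (y, n)) ⟨hy₀, hyn⟩ hlt.le)

/-- `w'` is a hopset for `w` with hop bound `t` and stretch `K` for all pairs at distance at most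
`a`. Only the upper bound on hop-bounded distances is recorded; that `w'` does not shorten
distances is not part of the notion. -/
def IsHopsetUpTo (w w' : V → V → ℝ≥0∞) (K : ℝ≥0∞) (t : ℕ) (a : ℝ≥0∞) : Prop :=
  ∀ u v, graphDist w u v ≤ a → hopDist w' t u v ≤ K * graphDist w u v

theorem IsHopsetUpTo.hopDist_le_mul_walkWeight (h : IsHopsetUpTo w w' K t a)
    (hx : walkWeight w x m ≤ a) : hopDist w' t (x 0) (x m) ≤ K * walkWeight w x m :=
  have hdist := graphDist_le_walkWeight w x m
  (h _ _ (hdist.trans hx)).trans (by gcongr)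

theorem IsHopsetUpTo.hopDist_add_le_mul_walkWeight (hs : IsHopsetUpTo w w' K s a)
    (ht : IsHopsetUpTo w w' K t b) (hle : ∀ u v, w' u v ≤ w u v) (hK : 1 ≤ K)
    (hx : walkWeight w x m ≤ a + b) :
    hopDist w' (s + 1 + t) (x 0) (x m) ≤ K * walkWeight w x m := by
  by_cases ha : walkWeight w x m ≤ a
  · exact (hopDist_antitone w' _ _ (by lia)).trans (hs.hopDist_le_mul_walkWeight ha)
  obtain ⟨i, n, rfl, hleft, hright⟩ := exists_walkWeight_split (not_le.1 ha) hx
  have left_le := hs.hopDist_le_mul_walkWeight hleft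
  have edge_le : hopDist w' 1 (x i) (x (i + 1)) ≤ K * w (x i) (x (i + 1)) :=
    ((hopDist_one_le w' _ _).trans (hle _ _)).trans (le_mul_of_one_le_left zero_le hK)
  have right_le := ht.hopDist_le_mul_walkWeight hright
  calc hopDist w' (s + 1 + t) (x 0) (x (i + 1 + n))
      ≤ hopDist w' s (x 0) (x i) + hopDist w' 1 (x i) (x (i + 1))
          + hopDist w' t (x (i + 1)) (x (i + 1 + n)) :=
        (hopDist_triangle w' _ _ _ (x (i + 1)) _).trans
          (add_le_add_left (hopDist_triangle w' _ _ _ _ _) _)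
    _ ≤ K * walkWeight w x i + K * w (x i) (x (i + 1))
          + K * walkWeight w (fun j => x (i + 1 + j)) n :=
        add_le_add (add_le_add left_le edge_le) right_le
    _ = K * walkWeight w x (i + 1 + n) := by
        rw [walkWeight_add, walkWeight_succ, mul_add, mul_add]

theorem scale_lifting_general (hw : (Set.range (Function.uncurry w)).IsPWO)
    (hle : ∀ u v, w' u v ≤ w u v) (hK : 1 ≤ K) (hs : IsHopsetUpTo w w' K s a)
    (ht : IsHopsetUpTo w w' K t b) : IsHopsetUpTo w w' K (s + 1 + t) (a + b) := by
  intro u v huv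
  obtain ⟨x, m, rfl, rfl, hx⟩ := exists_walkWeight_eq_graphDist hw u v
  rw [← hx] at huv ⊢
  exact hs.hopDist_add_le_mul_walkWeight ht hle hK huv

end Walks

/-- scale-lifting lemma (Lemma 2.1 of the paper). -/
theorem scale_lifting {V : Type*} [Fintype V] (w w' : V → V → ℝ≥0∞)
    (hwsymm : ∀ a b, w a b = w b a) (hw'symm : ∀ a b, w' a b = w' b a)
    (hle : ∀ a b, w' a b ≤ w a b) (β : ℕ) (ε : ℝ) (hε : 0 ≤ ε) (D : ℝ≥0∞)
    (hyp : ∀ u v, graphDist w u v ≤ D →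
      hopDist w' β u v ≤ ENNReal.ofReal (1 + ε) * graphDist w u v) :
    ∀ u v, graphDist w u v ≤ 2 * D →
      hopDist w' (2 * β + 1) u v ≤ ENNReal.ofReal (1 + ε) * graphDist w u v := by
  rw [two_mul, two_mul, add_right_comm]
  exact scale_lifting_general (Set.finite_range _).isPWO hle
    (ENNReal.one_le_ofReal.2 (le_add_of_nonneg_right hε)) hyp hyp
end

section
/- Fixed growth stage bound (Lemma 2.8): let n ≥ 1, κ ≥ 1, and ρ > 0 be real numbers with κρ ≥ 1, and set i_0 = ⌊log₂(κρ)⌋. Let (p_i)_{i∈ℕ} be a sequence of nonnegative reals such that p_{i_0+1} ≤ n^{1 − (2^{i_0+1} − 1)/κ} and p_{i+1} ≤ p_i · n^{−ρ} for all i ≥ i_0 + 1. Then for every i ≥ i_0 + 1 one has p_i ≤ n^{1 + 1/κ − (i − i_0)ρ}. -/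
/-!
Once the growth stage switches at a phase `k` with `κ * ρ ≤ 2 ^ (k + 1)`, the initial exponent
`1 - (2 ^ (k + 1) - 1) / κ = 1 + 1 / κ - 2 ^ (k + 1) / κ` is at most `1 + 1 / κ - ρ`, and every
later phase lowers the exponent by another `ρ`. The choice `k = ⌊log₂ (κ * ρ)⌋` is such a phase.
-/

theorem lt_pow_floor_logb_add_one {b x : ℝ} (hb : 1 < b) (hx : 0 < x) :
    x < b ^ (⌊Real.logb b x⌋₊ + 1) := by
  rw [← Real.rpow_natCast, ← Real.logb_lt_iff_lt_rpow hb hx, Nat.cast_add_one]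
  exact Nat.lt_floor_add_one _

theorem le_rpow_sub_mul_of_le_mul_rpow_neg {n ρ e : ℝ} (hn : 0 < n) {p : ℕ → ℝ} {m : ℕ}
    (hinit : p m ≤ n ^ e) (hrec : ∀ i, m ≤ i → p (i + 1) ≤ p i * n ^ (-ρ)) {i : ℕ} (hi : m ≤ i) :
    p i ≤ n ^ (e - ((i : ℝ) - m) * ρ) := by
  obtain ⟨j, rfl⟩ := Nat.exists_eq_add_of_le hi
  have hgeom : p (m + j) ≤ (n ^ (-ρ)) ^ j * p m :=
    le_geom (u := fun k ↦ p (m + k)) (by positivity) j fun k _ ↦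
      (hrec (m + k) (Nat.le_add_right m k)).trans_eq (mul_comm _ _)
  calc p (m + j) ≤ (n ^ (-ρ)) ^ j * p m := hgeom
    _ ≤ (n ^ (-ρ)) ^ j * n ^ e := by gcongr
    _ = n ^ (e - (((m + j : ℕ) : ℝ) - m) * ρ) := by
      rw [← Real.rpow_mul_natCast hn.le, ← Real.rpow_add hn]
      congr 1
      push_cast
      ring

theorem fixed_growth_bound_general {n κ ρ : ℝ} (hn : 1 ≤ n) (hκ : 0 < κ) {k : ℕ}
    (hk : κ * ρ ≤ 2 ^ (k + 1)) {p : ℕ → ℝ}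
    (hinit : p (k + 1) ≤ n ^ (1 - ((2 : ℝ) ^ (k + 1) - 1) / κ))
    (hrec : ∀ i, k + 1 ≤ i → p (i + 1) ≤ p i * n ^ (-ρ)) {i : ℕ} (hi : k + 1 ≤ i) :
    p i ≤ n ^ (1 + 1 / κ - ((i : ℝ) - k) * ρ) := by
  have hρ : ρ ≤ 2 ^ (k + 1) / κ := (le_div_iff₀' hκ).2 hk
  have hexp : 1 - ((2 : ℝ) ^ (k + 1) - 1) / κ ≤ 1 + 1 / κ - ρ := by
    rw [sub_div]
    linarith
  have hstart : p (k + 1) ≤ n ^ (1 + 1 / κ - ρ) :=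
    hinit.trans (Real.rpow_le_rpow_of_exponent_le hn hexp)
  convert le_rpow_sub_mul_of_le_mul_rpow_neg (by linarith) hstart hrec hi using 2
  push_cast
  ring

/-- fixed growth stage bound (Lemma 2.8 of the paper). -/
theorem fixed_growth_bound (n κ ρ : ℝ) (hn : 1 ≤ n) (hκ : 1 ≤ κ) (hρ : 0 < ρ)
    (hκρ : 1 ≤ κ * ρ)
    (p : ℕ → ℝ) (hp : ∀ i, 0 ≤ p i)
    (hinit : p (⌊Real.logb 2 (κ * ρ)⌋₊ + 1) ≤
      n ^ (1 - ((2 : ℝ) ^ (⌊Real.logb 2 (κ * ρ)⌋₊ + 1) - 1) / κ))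
    (hrec : ∀ i, ⌊Real.logb 2 (κ * ρ)⌋₊ + 1 ≤ i → p (i + 1) ≤ p i * n ^ (-ρ)) :
    ∀ i, ⌊Real.logb 2 (κ * ρ)⌋₊ + 1 ≤ i →
      p i ≤ n ^ (1 + 1 / κ - ((i : ℝ) - (⌊Real.logb 2 (κ * ρ)⌋₊ : ℝ)) * ρ) :=
  fun _ ↦ fixed_growth_bound_general hn (by linarith)
    (lt_pow_floor_logb_add_one one_lt_two (by linarith)).le hinit hrec
end

section
/- Bound on the hop recursion (a corrected form of Lemma 3.3): let ε > 0 be a real number, and define a sequence by h_0 = 1 and h_{i+1} = (1/ε + 2)·(h_i + 1) + 2(i+1) + 1 for all i ∈ ℕ. Then for every i ∈ ℕ, h_i ≤ (1/ε + 5)^{i+1}. -/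
section OrderedSemiring

variable {R : Type*} [CommSemiring R] [PartialOrder R] [IsStrictOrderedRing R] {a : R}

theorem add_three_add_two_mul_le_pow_succ (ha : 0 ≤ a) (n : ℕ) :
    a + 3 + 2 * n ≤ (a + 3) ^ (n + 1) := by
  have bernoulli : 1 + ((n + 1 : ℕ) : R) * (a + 2) ≤ (1 + (a + 2)) ^ (n + 1) :=
    one_add_mul_le_pow_of_sq_nonneg (by positivity) (by positivity) (by positivity) (n + 1)
  calc
    a + 3 + 2 * n ≤ a + 3 + 2 * n + n * a := le_add_of_nonneg_right (by positivity)
    _ = 1 + ((n + 1 : ℕ) : R) * (a + 2) := by push_cast; ring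
    _ ≤ (1 + (a + 2)) ^ (n + 1) := bernoulli
    _ = (a + 3) ^ (n + 1) := by ring

theorem hop_step_add_three_pow_le (ha : 0 ≤ a) (n : ℕ) :
    a * ((a + 3) ^ (n + 1) + 1) + 2 * ((n : R) + 1) + 1 ≤ (a + 3) ^ (n + 2) :=
  calc
    a * ((a + 3) ^ (n + 1) + 1) + 2 * ((n : R) + 1) + 1
        = a * (a + 3) ^ (n + 1) + (a + 3 + 2 * n) := by ring
    _ ≤ a * (a + 3) ^ (n + 1) + (a + 3) ^ (n + 1) := by
        gcongr
        exact add_three_add_two_mul_le_pow_succ ha n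
    _ ≤ a * (a + 3) ^ (n + 1) + (a + 3) ^ (n + 1) + 2 * (a + 3) ^ (n + 1) :=
        le_add_of_nonneg_right (by positivity)
    _ = (a + 3) ^ (n + 2) := by ring

theorem hop_recursion_bound_general (ha : 0 ≤ a) {h : ℕ → R} (h0 : h 0 ≤ a + 3)
    (hrec : ∀ i : ℕ, h (i + 1) ≤ a * (h i + 1) + 2 * ((i : R) + 1) + 1) (i : ℕ) :
    h i ≤ (a + 3) ^ (i + 1) := by
  induction i with
  | zero => simpa only [zero_add, pow_one] using h0
  | succ n ih =>
    calc
      h (n + 1) ≤ a * (h n + 1) + 2 * ((n : R) + 1) + 1 := hrec n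
      _ ≤ a * ((a + 3) ^ (n + 1) + 1) + 2 * ((n : R) + 1) + 1 := by gcongr
      _ ≤ (a + 3) ^ (n + 2) := hop_step_add_three_pow_le ha n

end OrderedSemiring

/-- bound on the hop recursion (corrected form of Lemma 3.3). -/
theorem hop_recursion_bound (ε : ℝ) (hε : 0 < ε) (h : ℕ → ℝ)
    (h0 : h 0 = 1)
    (hrec : ∀ i : ℕ, h (i + 1) = (1 / ε + 2) * (h i + 1) + 2 * ((i : ℝ) + 1) + 1) :
    ∀ i : ℕ, h i ≤ (1 / ε + 5) ^ (i + 1) := by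
  have one_div_ε_pos : 0 < 1 / ε := one_div_pos.mpr hε
  rw [show 1 / ε + 5 = 1 / ε + 2 + 3 by ring]
  exact hop_recursion_bound_general (by linarith) (by linarith) fun i => (hrec i).le
end
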